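/- Let k ≥ 1 be an integer and ε = 2^{−k}. Let m ≥ 2, let e₁ ∈ ℝ^m be the first standard basis vector, and let f' : [−ε, 1] → ℝ^m be any injective map with f'(−ε) = ε·e₁, f'(0) = 0, and f'(1) = e₁. Then the distortion of f' is at least min(1/cos(π/(k + 2)), √2). -/

import Mathlib

/-- `g` restricted to `A ⊆ ℝ` (mapping into `ℝᵐ`) has distortion at most `D`. -/
def HasDistortionAtMost {m : ℕ} (A : Set ℝ) (g : ℝ → EuclideanSpace ℝ (Fin m)) (D : ℝ) : Prop :=
  ∃ lam > (0 : ℝ), ∀ x ∈ A, ∀ y ∈ A,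
    lam * |x - y| ≤ ‖g x - g y‖ ∧ ‖g x - g y‖ ≤ lam * D * |x - y|

open InnerProductGeometry in
lemma step_angle {V : Type*} [NormedAddCommGroup V] [InnerProductSpace ℝ V] (u v : V) (s D : ℝ)
    (hs : 0 < s) (hD1 : 1 ≤ D) (hD2 : D ^ 2 ≤ 2) (hu : 2 * s ≤ ‖u‖) (hv : s ≤ ‖v‖)
    (hv' : ‖v‖ ≤ s * D) (huv : ‖u - v‖ ≤ s * D) : angle u v ≤ Real.arccos (1 / D) := by
  have hD0 : 0 < D := by linarith
  have hw := norm_sub_sq_real u v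
  have hn := norm_nonneg (u - v)
  have hc : ‖u - v‖ ^ 2 ≤ (s * D) ^ 2 := by gcongr
  unfold angle
  apply Real.arccos_le_arccos
  have hu0 : 0 < ‖u‖ := by linarith
  have hv0 : 0 < ‖v‖ := by linarith
  rw [div_le_div_iff₀ hD0 (by positivity)]
  set a := ‖u‖
  obtain ⟨q, hq⟩ : ∃ q, ‖v‖ = D * q := ⟨‖v‖ / D, by field_simp⟩
  rw [hq] at hv hv' hw hv0 ⊢
  have hqs : q ≤ s := by nlinarith
  have hq0 : 0 < q := by nlinarith
  have key : 2 * a * q ≤ a ^ 2 + (D * q) ^ 2 - (s * D) ^ 2 := by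
    have h1 : (2 * s - q) ^ 2 ≤ (a - q) ^ 2 := by
      apply pow_le_pow_left₀ <;> linarith
    have h2 : 0 ≤ (s - q) * (4 * s - D ^ 2 * (s + q)) := by
      apply mul_nonneg (by linarith)
      nlinarith
    nlinarith
  nlinarith

open InnerProductGeometry in
lemma end_angle {V : Type*} [NormedAddCommGroup V] [InnerProductSpace ℝ V] (u v : V) (s D : ℝ)
    (hs : 0 < s) (hD1 : 1 ≤ D) (hD2 : D ^ 2 ≤ 2) (hu : 0 < ‖u‖) (hv : 0 < ‖v‖)
    (hu' : ‖u‖ ≤ s * D) (hv' : ‖v‖ ≤ s * D) (huv : 2 * s ≤ ‖u - v‖) :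
    Real.pi - 2 * Real.arccos (1 / D) ≤ angle u v := by
  have hD0 : 0 < D := by linarith
  have hw := norm_sub_sq_real u v
  have hc : (2 * s) ^ 2 ≤ ‖u - v‖ ^ 2 := by gcongr
  have hi : inner ℝ u v = Real.cos (angle u v) * (‖u‖ * ‖v‖) :=
    (cos_angle_mul_norm_mul_norm u v).symm
  have hcos : Real.cos (Real.pi - 2 * Real.arccos (1 / D)) = 1 - 2 * (1 / D) ^ 2 := by
    rw [Real.cos_pi_sub, Real.cos_two_mul, Real.cos_arccos]
    · ring
    · have : 0 < 1 / D := by positivity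
      linarith
    · rw [div_le_one hD0]; exact hD1
  by_contra! hlt
  have h0 := Real.arccos_nonneg (1 / D)
  have h1 := Real.cos_lt_cos_of_nonneg_of_le_pi (angle_nonneg u v) (by linarith) hlt
  rw [hcos] at h1
  have h2 : (1 - 2 * (1 / D) ^ 2) * (‖u‖ * ‖v‖) < inner ℝ u v := by
    rw [hi]; gcongr
  obtain ⟨w, hwd⟩ : ∃ w, w = (1 / D) ^ 2 := ⟨_, rfl⟩
  rw [← hwd] at h2
  have hwD : w * D ^ 2 = 1 := by rw [hwd]; field_simp
  have hw2 : 1 ≤ 2 * w := by nlinarith [sq_nonneg (1 / D)]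
  obtain ⟨M, hM⟩ : ∃ M, M = s * D := ⟨_, rfl⟩
  rw [← hM] at hu' hv'
  have hs2 : s ^ 2 = w * M ^ 2 := by rw [hM, mul_pow]; linear_combination (-s ^ 2) * hwD
  obtain ⟨p, hp⟩ : ∃ p, ‖u‖ = M - p := ⟨M - ‖u‖, by ring⟩
  obtain ⟨q, hq⟩ : ∃ q, ‖v‖ = M - q := ⟨M - ‖v‖, by ring⟩
  rw [hp, hq] at hw h2
  rw [hp] at hu hu'
  rw [hq] at hv hv'
  have hp0 : 0 ≤ p := by linarith
  have hq0 : 0 ≤ q := by linarith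
  have e1 : w * (p * p + q * q) ≤ w * (M * (p + q)) := by
    apply mul_le_mul_of_nonneg_left _ (by linarith)
    nlinarith
  have e2 : 0 ≤ w * (p - q) ^ 2 := mul_nonneg (by linarith) (sq_nonneg _)
  have e3 : 0 ≤ (2 * w - 1) * (p ^ 2 + q ^ 2) := mul_nonneg (by linarith) (by positivity)
  have e4 : 0 ≤ p * q := mul_nonneg hp0 hq0
  nlinarith

/-- **Lower bound on the distortion of extensions of the three-point example.** Let `k ≥ 1`,
`ε = 2⁻ᵏ`, `m ≥ 2`. Every injective map `f' : [-ε, 1] → ℝᵐ` with `f'(-ε) = ε e₁`,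
`f' 0 = 0` and `f' 1 = e₁` has distortion at least `min (1/cos(π/(k+2))) √2`. -/
theorem lower_bound_on_interval_extension (k : ℕ) (hk : 1 ≤ k) (ε : ℝ) (hε : ε = 1 / 2 ^ k)
    (m : ℕ) (hm : 2 ≤ m) (f' : ℝ → EuclideanSpace ℝ (Fin m))
    (hinj : Set.InjOn f' (Set.Icc (-ε) 1))
    (h₁ : ∀ j : Fin m, f' (-ε) j = if (j : ℕ) = 0 then ε else 0)
    (h₂ : ∀ j : Fin m, f' 0 j = 0)
    (h₃ : ∀ j : Fin m, f' 1 j = if (j : ℕ) = 0 then 1 else 0)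
    (D : ℝ) (hD : HasDistortionAtMost (Set.Icc (-ε) 1) f' D) :
    min (1 / Real.cos (Real.pi / (k + 2))) (Real.sqrt 2) ≤ D := by
  obtain ⟨L, hL, h⟩ := hD
  have hε0 : 0 < ε := by rw [hε]; positivity
  have hf0 : f' 0 = 0 := by ext j; simpa using h₂ j
  have hfe : f' (-ε) = ε • f' 1 := by
    ext j
    simp [h₁, h₃]
  have m0 : (0 : ℝ) ∈ Set.Icc (-ε) 1 := ⟨by linarith, by norm_num⟩
  have m1 : (1 : ℝ) ∈ Set.Icc (-ε) 1 := ⟨by linarith, le_refl _⟩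
  have me : -ε ∈ Set.Icc (-ε) 1 := ⟨le_refl _, by linarith⟩
  have hD1 : 1 ≤ D := by
    have := h 1 m1 0 m0
    have h2 := this.1.trans this.2
    simp at h2
    nlinarith
  have hD0 : 0 < D := by linarith
  by_contra! hlt
  rw [lt_min_iff] at hlt
  obtain ⟨hc, hs⟩ := hlt
  have hD2 : D ^ 2 ≤ 2 := by
    have := (Real.lt_sqrt hD0.le).1 hs
    exact this.le
  have mem : ∀ i : ℕ, (1 / 2 ^ i : ℝ) ∈ Set.Icc (-ε) 1 := by
    intro i
    have : (0 : ℝ) < 1 / 2 ^ i := by positivity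
    refine ⟨by linarith, ?_⟩
    rw [div_le_one (by positivity)]
    exact one_le_pow₀ (by norm_num)
  have nrm : ∀ x ∈ Set.Icc (-ε) 1, L * |x| ≤ ‖f' x‖ ∧ ‖f' x‖ ≤ L * D * |x| := by
    intro x hx
    simpa [hf0] using h x hx 0 m0
  have hne1 : f' 1 ≠ 0 := by
    intro h0
    have := (nrm 1 m1).1
    rw [h0] at this
    simp at this
    linarith
  have step : ∀ i : ℕ, InnerProductGeometry.angle (f' 1) (f' (1 / 2 ^ i)) ≤
      i * Real.arccos (1 / D) := by
    intro i
    induction i with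
    | zero => simp [InnerProductGeometry.angle_self hne1]
    | succ i ih =>
      have hx : (1 / 2 ^ i : ℝ) = 2 * (1 / 2 ^ (i + 1)) := by rw [pow_succ]; field_simp
      obtain ⟨t, ht⟩ : ∃ t : ℝ, t = 1 / 2 ^ (i + 1) := ⟨_, rfl⟩
      have ht0 : 0 < t := by rw [ht]; positivity
      have n1 := nrm _ (mem i)
      have n2 := nrm _ (mem (i + 1))
      have n3 := h _ (mem i) _ (mem (i + 1))
      rw [hx, ← ht] at n1 n3 ih
      rw [← ht] at n2 ⊢
      have e : 2 * t - t = t := by ring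
      rw [e, abs_of_pos ht0] at n3
      rw [abs_of_pos ht0] at n2
      rw [abs_of_pos (by linarith : 0 < 2 * t)] at n1
      have := step_angle (f' (2 * t)) (f' t) (L * t) D (by positivity) hD1 hD2
        (by linarith) (by linarith) (by linarith) (by linarith)
      have tri := InnerProductGeometry.angle_le_angle_add_angle (f' 1) (f' (2 * t)) (f' t)
      push_cast
      linarith
  have hk' := step k
  rw [← hε] at hk'
  have mε := mem k
  rw [← hε] at mε
  have n1 := nrm _ mε
  have n2 := nrm _ me
  have n3 := h _ me _ mε
  have e : |-ε - ε| = 2 * ε := by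
    rw [show -ε - ε = -(2 * ε) by ring, abs_neg, abs_of_pos (by linarith)]
  rw [e] at n3
  rw [abs_neg, abs_of_pos hε0] at n2
  rw [abs_of_pos hε0] at n1
  have hpos : 0 < L * ε := by positivity
  have he := end_angle (f' (-ε)) (f' ε) (L * ε) D hpos hD1 hD2
    (by linarith) (by linarith) (by linarith) (by linarith) (by linarith)
  rw [hfe, InnerProductGeometry.angle_smul_left_of_pos _ _ hε0] at he
  have hφ : Real.pi / (k + 2) ≤ Real.arccos (1 / D) := by
    rw [div_le_iff₀ (by positivity)]
    linarith
  have hk1 : (1 : ℝ) ≤ k := by exact_mod_cast hk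
  have hpi := Real.pi_pos
  have hcos := Real.cos_le_cos_of_nonneg_of_le_pi (by positivity) (Real.arccos_le_pi _) hφ
  rw [Real.cos_arccos (by have : 0 < 1 / D := by positivity
                          linarith) (by rw [div_le_one hD0]; exact hD1)] at hcos
  have := one_div_le_one_div_of_le (by positivity) hcos
  rw [one_div_one_div] at this
  linarith
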